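/- arXiv:2404.09460 — 2 statements merged into one kernel-verified Lean document; each statement's English description precedes it below -/
import Mathlib

section
/- Let α > 0, R > 0, Q > 0, Z ≥ 0, let t₀ and D be natural numbers, and let z, x : ℕ → ℝ be sequences with 0 ≤ z(t) ≤ Z for all t and x(t) ≥ 0 for all t. Suppose z(t+1) ≥ z(t) + α/R − x(t) for all t ∈ {t₀, t₀+1, …, t₀+D}, and ∑_{t=t₀}^{t₀+D} x(t) < Q. Then D < R·(Q + Z)/α. -/
/-- Core of the charging-delay bound: if the virtual queue increases by at least
`α/R - x t` over each of the slots `t₀, …, t₀ + D`, stays in `[0, Z]`, and the total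
service over those slots is less than `Q`, then `D < R*(Q + Z)/α`. -/
theorem charging_delay_bound (α R Q Z : ℝ) (hα : 0 < α) (hR : 0 < R) (hQ : 0 < Q)
    (hZ : 0 ≤ Z) (t₀ D : ℕ) (z x : ℕ → ℝ)
    (hz : ∀ t, 0 ≤ z t ∧ z t ≤ Z) (hx : ∀ t, 0 ≤ x t)
    (hstep : ∀ t ∈ Finset.Icc t₀ (t₀ + D), z (t + 1) ≥ z t + α / R - x t)
    (hsum : ∑ t ∈ Finset.Icc t₀ (t₀ + D), x t < Q) :
    (D : ℝ) < R * (Q + Z) / α := by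
  have key : ∀ n : ℕ, n ≤ D →
      z t₀ + ((n : ℝ) + 1) * (α / R) - ∑ t ∈ Finset.Icc t₀ (t₀ + n), x t ≤ z (t₀ + n + 1) := by
    intro n
    induction n with
    | zero =>
      intro _
      have h := hstep t₀ (by simp)
      simp only [Nat.add_zero, Finset.Icc_self, Finset.sum_singleton, Nat.cast_zero]
      linarith
    | succ k ih =>
      intro hk
      have h1 := ih (by omega)
      have h2 := hstep (t₀ + k + 1) (by rw [Finset.mem_Icc]; omega)
      have h3 : ∑ t ∈ Finset.Icc t₀ (t₀ + (k + 1)), x t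
          = ∑ t ∈ Finset.Icc t₀ (t₀ + k), x t + x (t₀ + k + 1) :=
        Finset.sum_Icc_succ_top (a := t₀) (b := t₀ + k) (by omega) x
      rw [h3, ← Nat.add_assoc]
      push_cast
      linarith
  have h := key D le_rfl
  have h0 := (hz t₀).1
  have h1 := (hz (t₀ + D + 1)).2
  have hp : 0 < α / R := div_pos hα hR
  have h2 : (D : ℝ) * (α / R) < Q + Z := by linarith
  rw [lt_div_iff₀ hα]
  have h3 : (D : ℝ) * α = R * ((D : ℝ) * (α / R)) := by field_simp
  rw [h3]
  exact mul_lt_mul_of_pos_left h2 hR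
end

section
/- Fix a positive integer G, V > 0, and constants A_g ≥ 0, Q_g ≥ 0, Z_g ≥ 0, b_g ≥ 0, X̄_g ≥ 0 for g = 1,…,G. Let π : ℕ → ℝ, and for each g let a_g, X_g, x̂_g, x*_g : ℕ → ℝ be sequences with 0 ≤ a_g(t) ≤ A_g, 0 ≤ X_g(t) ≤ X̄_g, 0 ≤ x̂_g(t) ≤ X_g(t), 0 ≤ x*_g(t) ≤ X_g(t) for all t. Let the queues satisfy q_g(1) = 0, z_g(1) = 0, q_g(t+1) = max(q_g(t) − x̂_g(t), 0) + a_g(t), z_g(t+1) = max(z_g(t) + b_g·𝟙[q_g(t) > 0] − x̂_g(t), 0), and suppose q_g(t) ≤ Q_g and z_g(t) ≤ Z_g for all t. Suppose further that for every t, the vector (x̂_g(t))_g minimizes ∑_g [(V·π(t) − q_g(t) − z_g(t))·x_g + (1/2)·x_g²] over the box {0 ≤ x_g ≤ X_g(t), g = 1,…,G}. Define f̂(t) = π(t)·∑_g x̂_g(t) and f*(t) = π(t)·∑_g x*_g(t). Then for every positive integer T, (1/T) ∑_{t=1}^{T} (f̂(t) − f*(t)) ≤ M̃/V, where M̃ =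 ∑_g (A_g²/2 + Q_g·A_g + Z_g·b_g) + (1/2)∑_g max(b_g², X̄_g²) + (1/2)∑_g X̄_g². -/
theorem drift_q {q x a A Q : ℝ} (hq : 0 ≤ q) (hx : 0 ≤ x) (ha : 0 ≤ a) (haA : a ≤ A)
    (hqQ : q ≤ Q) :
    (max (q - x) 0 + a) ^ 2 / 2 - q ^ 2 / 2 ≤
      -(q * x) + (1 / 2) * x ^ 2 + (A ^ 2 / 2 + Q * A) := by
  have h1 : a ^ 2 ≤ A ^ 2 := pow_le_pow_left₀ ha haA 2
  have h2 : q * a ≤ Q * A := mul_le_mul hqQ haA ha (hq.trans hqQ)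
  have h3 : max (q - x) 0 ≤ q := max_le (by linarith) hq
  have h4 : max (q - x) 0 ^ 2 ≤ (q - x) ^ 2 := by
    rcases max_cases (q - x) 0 with h | h <;> rw [h.1]
    nlinarith [sq_nonneg (q - x)]
  have h5 := mul_le_mul_of_nonneg_right h3 ha
  nlinarith

theorem drift_z {z x b i B Z : ℝ} (hz : 0 ≤ z) (hx : 0 ≤ x) (hxB : x ≤ B) (hb : 0 ≤ b)
    (hi0 : 0 ≤ i) (hi1 : i ≤ 1) (hzZ : z ≤ Z) :
    (max (z + b * i - x) 0) ^ 2 / 2 - z ^ 2 / 2 ≤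
      -(z * x) + Z * b + (1 / 2) * max (b ^ 2) (B ^ 2) := by
  have hc0 : 0 ≤ b * i := mul_nonneg hb hi0
  have hc1 : b * i ≤ b := mul_le_of_le_one_right hb hi1
  generalize b * i = c at *
  have h2 : z * c ≤ Z * b := mul_le_mul hzZ hc1 hc0 (hz.trans hzZ)
  have h4 : max (z + c - x) 0 ^ 2 ≤ (z + c - x) ^ 2 := by
    rcases max_cases (z + c - x) 0 with h | h <;> rw [h.1]
    nlinarith [sq_nonneg (z + c - x)]
  have h5 : (c - x) ^ 2 ≤ max (b ^ 2) (B ^ 2) := by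
    rcases le_total x c with h | h
    · exact le_max_of_le_left (pow_le_pow_left₀ (by linarith) (by linarith) 2)
    · refine le_max_of_le_right ?_
      rw [← neg_sq, neg_sub]
      exact pow_le_pow_left₀ (by linarith) (by linarith) 2
  nlinarith

/-- Deterministic form of Proposition 1 (optimality gap of the online
drift-plus-penalty algorithm): the time-averaged cost of the online schedule `x̂`
exceeds that of any feasible schedule `x*` by at most `M̃ / V`. -/
theorem online_optimality_gap (G : ℕ) (hG : 0 < G) (V : ℝ) (hV : 0 < V)
    (A Q Z b Xbar : Fin G → ℝ)
    (hA : ∀ g, 0 ≤ A g) (hQ : ∀ g, 0 ≤ Q g) (hZ : ∀ g, 0 ≤ Z g)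
    (hb : ∀ g, 0 ≤ b g) (hXbar : ∀ g, 0 ≤ Xbar g)
    (π : ℕ → ℝ) (a X xhat xstar q z : Fin G → ℕ → ℝ)
    (ha : ∀ g t, 0 ≤ a g t ∧ a g t ≤ A g)
    (hX : ∀ g t, 0 ≤ X g t ∧ X g t ≤ Xbar g)
    (hxhat : ∀ g t, 0 ≤ xhat g t ∧ xhat g t ≤ X g t)
    (hxstar : ∀ g t, 0 ≤ xstar g t ∧ xstar g t ≤ X g t)
    (hq1 : ∀ g, q g 1 = 0) (hz1 : ∀ g, z g 1 = 0)
    (hqrec : ∀ g, ∀ t, 1 ≤ t → q g (t + 1) = max (q g t - xhat g t) 0 + a g t)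
    (hzrec : ∀ g, ∀ t, 1 ≤ t →
      z g (t + 1) = max (z g t + b g * (if 0 < q g t then (1 : ℝ) else 0) - xhat g t) 0)
    (hqQ : ∀ g t, q g t ≤ Q g) (hzZ : ∀ g t, z g t ≤ Z g)
    (hmin : ∀ t, ∀ y : Fin G → ℝ, (∀ g, 0 ≤ y g ∧ y g ≤ X g t) →
      ∑ g, ((V * π t - q g t - z g t) * xhat g t + (1 / 2) * (xhat g t) ^ 2) ≤
      ∑ g, ((V * π t - q g t - z g t) * y g + (1 / 2) * (y g) ^ 2)) :
    ∀ T : ℕ, 0 < T →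
      (1 / (T : ℝ)) * ∑ t ∈ Finset.Icc 1 T,
          (π t * ∑ g, xhat g t - π t * ∑ g, xstar g t) ≤
      (∑ g, ((A g) ^ 2 / 2 + Q g * A g + Z g * b g) +
        (1 / 2) * ∑ g, max ((b g) ^ 2) ((Xbar g) ^ 2) +
        (1 / 2) * ∑ g, (Xbar g) ^ 2) / V := by
  have hq0 : ∀ g t, 1 ≤ t → 0 ≤ q g t := by
    intro g t ht
    obtain rfl | h := Nat.eq_or_lt_of_le ht
    · exact (hq1 g).ge
    · obtain ⟨s, rfl⟩ : ∃ s, t = s + 1 := ⟨t - 1, by omega⟩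
      rw [hqrec g s (by omega)]
      exact add_nonneg (le_max_right _ _) (ha g s).1
  have hz0 : ∀ g t, 1 ≤ t → 0 ≤ z g t := by
    intro g t ht
    obtain rfl | h := Nat.eq_or_lt_of_le ht
    · exact (hz1 g).ge
    · obtain ⟨s, rfl⟩ : ∃ s, t = s + 1 := ⟨t - 1, by omega⟩
      rw [hzrec g s (by omega)]
      exact le_max_right _ _
  set M : ℝ := ∑ g, ((A g) ^ 2 / 2 + Q g * A g + Z g * b g) +
        (1 / 2) * ∑ g, max ((b g) ^ 2) ((Xbar g) ^ 2) +
        (1 / 2) * ∑ g, (Xbar g) ^ 2 with hM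
  have hdrift : ∀ g t, 1 ≤ t →
      ((q g (t + 1)) ^ 2 + (z g (t + 1)) ^ 2) / 2 - ((q g t) ^ 2 + (z g t) ^ 2) / 2 ≤
      -(q g t * xhat g t) - z g t * xhat g t + (1 / 2) * (xhat g t) ^ 2 +
        (((A g) ^ 2 / 2 + Q g * A g + Z g * b g) +
          (1 / 2) * max ((b g) ^ 2) ((Xbar g) ^ 2)) := by
    intro g t ht
    have h1 := drift_q (hq0 g t ht) (hxhat g t).1 (ha g t).1 (ha g t).2 (hqQ g t)
    have h2 := drift_z (i := if 0 < q g t then (1 : ℝ) else 0) (hz0 g t ht) (hxhat g t).1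
      ((hxhat g t).2.trans (hX g t).2) (hb g) (by split_ifs <;> norm_num)
      (by split_ifs <;> norm_num) (hzZ g t)
    rw [← hqrec g t ht] at h1
    rw [← hzrec g t ht] at h2
    linarith
  have hslot : ∀ t, 1 ≤ t →
      V * (π t * ∑ g, xhat g t - π t * ∑ g, xstar g t) ≤
        M - (∑ g, ((q g (t + 1)) ^ 2 + (z g (t + 1)) ^ 2) / 2 -
          ∑ g, ((q g t) ^ 2 + (z g t) ^ 2) / 2) := by
    intro t ht
    have h1 := Finset.sum_le_sum (fun g (_ : g ∈ Finset.univ) => hdrift g t ht)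
    have h2 := hmin t (fun g => xstar g t) (fun g => hxstar g t)
    have h3 : ∑ g, ((V * π t - q g t - z g t) * xstar g t + (1 / 2) * (xstar g t) ^ 2) ≤
        ∑ g, (V * π t * xstar g t + (1 / 2) * (Xbar g) ^ 2) := by
      refine Finset.sum_le_sum fun g _ => ?_
      have e1 := mul_nonneg (hq0 g t ht) (hxstar g t).1
      have e2 := mul_nonneg (hz0 g t ht) (hxstar g t).1
      have e3 := pow_le_pow_left₀ (hxstar g t).1 ((hxstar g t).2.trans (hX g t).2) 2
      nlinarith
    have h4 : ∑ g, ((V * π t - q g t - z g t) * xhat g t + (1 / 2) * (xhat g t) ^ 2) =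
        V * π t * ∑ g, xhat g t +
        ∑ g, (-(q g t * xhat g t) - z g t * xhat g t + (1 / 2) * (xhat g t) ^ 2) := by
      rw [Finset.mul_sum, ← Finset.sum_add_distrib]
      exact Finset.sum_congr rfl fun g _ => by ring
    rw [Finset.sum_sub_distrib, Finset.sum_add_distrib, Finset.sum_add_distrib (f := fun g =>
      (A g) ^ 2 / 2 + Q g * A g + Z g * b g), ← Finset.mul_sum] at h1
    replace h3 := h2.trans h3
    rw [h4, Finset.sum_add_distrib (f := fun g => V * π t * xstar g t), ← Finset.mul_sum,
      ← Finset.mul_sum] at h3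
    rw [hM]
    linarith
  have hsum : ∀ T : ℕ, V * ∑ t ∈ Finset.Icc 1 T,
      (π t * ∑ g, xhat g t - π t * ∑ g, xstar g t) ≤
      T * M - ∑ g, ((q g (T + 1)) ^ 2 + (z g (T + 1)) ^ 2) / 2 := by
    intro T
    induction T with
    | zero => simp [hq1, hz1]
    | succ n ih =>
      rw [Finset.sum_Icc_succ_top (by omega), mul_add]
      have := hslot (n + 1) (by omega)
      push_cast
      linarith
  intro T hT
  have hT' : (0 : ℝ) < T := by exact_mod_cast hT
  have h := hsum T
  have hn : 0 ≤ ∑ g, ((q g (T + 1)) ^ 2 + (z g (T + 1)) ^ 2) / 2 :=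
    Finset.sum_nonneg fun g _ => by positivity
  rw [one_div_mul_eq_div, div_le_div_iff₀ hT' hV]
  linarith
end
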